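/- arXiv:math/0611890 — 4 statements merged into one kernel-verified Lean document; each statement's English description precedes it below -/
import Mathlib

section
/- The system B = {ψ_m}_{m=1}^∞ is democratic in L_p([0,1]) for every 1 < p < ∞; more precisely, for each such p there are constants c_p, C_p > 0 so that for every finite set A ⊂ ℕ, c_p |A|^{1/2} ≤ ‖Σ_{m∈A} ψ_m‖_{L_p} ≤ C_p |A|^{1/2}. -/
open MeasureTheory Filter

noncomputable section

/-- Rademacher functions `r_k(t) = sign (sin (2^k π t))`, for `k ≥ 1`. -/
def rademacher (k : ℕ) (t : ℝ) : ℝ := Real.sign (Real.sin ((2:ℝ) ^ k * Real.pi * t))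

/-- The Walsh system: for `n = ∑ ε_j 2^(j-1)`, `W_n = ∏ r_j^(ε_j)`. -/
def walsh (n : ℕ) (t : ℝ) : ℝ :=
  ∏ j ∈ Finset.range n, if n.testBit j then rademacher (j + 1) t else 1

/-- The Olevskiĭ matrix entries `a_{ij}^{(k)}`, with `1 ≤ i, j ≤ 2^k` (1-based indices). -/
def olevskii (k i j : ℕ) : ℝ :=
  if j = 1 then (2:ℝ) ^ (-(k:ℝ) / 2)
  else
    let s := Nat.log 2 (j - 1)
    let ν := j - 2 ^ s
    if (ν - 1) * 2 ^ (k - s) < i ∧ i ≤ (2 * ν - 1) * 2 ^ (k - s - 1) then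
      (2:ℝ) ^ (((s:ℝ) - k) / 2)
    else if (2 * ν - 1) * 2 ^ (k - s - 1) < i ∧ i ≤ ν * 2 ^ (k - s) then
      -((2:ℝ) ^ (((s:ℝ) - k) / 2))
    else 0

/-- `N_k = 2^(10^k)`. -/
def Nn (k : ℕ) : ℕ := 2 ^ 10 ^ k

/-- `F_0 = 0`, `F_k = F_(k-1) + N_k - 1`. -/
def Fn : ℕ → ℕ
  | 0 => 0
  | k + 1 => Fn k + Nn (k + 1) - 1

/-- `φ_k`, the `k`-th (1-based) Walsh function that is not a Rademacher function,
in the Walsh order. -/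
def phi (k : ℕ) : ℝ → ℝ := walsh (Nat.nth (fun n => ¬ ∃ m : ℕ, n = 2 ^ m) (k - 1))

/-- `ψ_i^{(k)} = φ_k/√N_k + ∑_{j=2}^{N_k} a_{ij}^{(10^k)} r_{F_{k-1}+j-1}`. -/
def psiBlock (k i : ℕ) : ℝ → ℝ := fun t =>
  phi k t / Real.sqrt (Nn k) +
    ∑ j ∈ Finset.Icc 2 (Nn k), olevskii (10 ^ k) i j * rademacher (Fn (k - 1) + j - 1) t

/-- Cumulative block lengths: `cum k = N_1 + ⋯ + N_k`. -/
def cum : ℕ → ℕ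
  | 0 => 0
  | k + 1 => cum k + Nn (k + 1)

lemma le_cum (k : ℕ) : k ≤ cum k := by
  induction k with
  | zero => simp [cum]
  | succ k ih =>
      have h : 1 ≤ Nn (k + 1) := Nat.one_le_two_pow
      simp only [cum]; omega

/-- `psi m` is `ψ_{m+1}`, the `(m+1)`-th element of the system
`B = (ψ_1^{(1)}, …, ψ_{N_1}^{(1)}, ψ_1^{(2)}, …)` (0-based global indexing). -/
def psi (m : ℕ) : ℝ → ℝ :=
  let k := Nat.find (show ∃ k, m + 1 ≤ cum k from ⟨m + 1, le_cum (m + 1)⟩)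
  psiBlock k (m + 1 - cum (k - 1))

/-- `⟨f, g⟩ = ∫_0^1 f g`. -/
def inner01 (f g : ℝ → ℝ) : ℝ := ∫ t in Set.Icc (0:ℝ) 1, f t * g t

/-- The `L_p([0,1])` norm of a function. -/
def LpNorm (p : ℝ) (f : ℝ → ℝ) : ℝ :=
  (∫ t in Set.Icc (0:ℝ) 1, |f t| ^ p) ^ (1 / p)

/-- `ρ` is a greedy ordering for the coefficient sequence `c`. -/
def IsGreedyOrdering (c : ℕ → ℝ) (ρ : ℕ → ℕ) : Prop :=
  Function.Injective ρ ∧ {j | c j ≠ 0} ⊆ Set.range ρ ∧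
    ∀ j k : ℕ, j < k → |c (ρ k)| < |c (ρ j)| ∨ (|c (ρ k)| = |c (ρ j)| ∧ ρ j < ρ k)

end

namespace OlevProof

open Finset

lemma rad_meas (k : ℕ) : Measurable (rademacher k) := by
  unfold rademacher
  have h : Measurable Real.sign := by
    unfold Real.sign
    exact Measurable.ite measurableSet_Iio measurable_const
      (Measurable.ite measurableSet_Ioi measurable_const measurable_const)
  exact h.comp (by fun_prop)

lemma rad_cases (k : ℕ) (t : ℝ) :
    rademacher k t = -1 ∨ rademacher k t = 0 ∨ rademacher k t = 1 :=
  Real.sign_apply_eq _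

lemma rad_abs (k : ℕ) (t : ℝ) : |rademacher k t| ≤ 1 := by
  rcases rad_cases k t with h | h | h <;> rw [h] <;> norm_num

lemma rad_double (k : ℕ) (t : ℝ) : rademacher (k + 1) t = rademacher k (2 * t) := by
  unfold rademacher
  congr 2
  ring

lemma rad_period (k : ℕ) (t : ℝ) : rademacher (k + 1) (t + 1) = rademacher (k + 1) t := by
  unfold rademacher
  congr 1
  have : (2:ℝ) ^ (k + 1) * Real.pi * (t + 1)
      = 2 ^ (k + 1) * Real.pi * t + ((2 ^ k : ℕ) : ℝ) * (2 * Real.pi) := by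
    push_cast; ring
  rw [this, Real.sin_add_nat_mul_two_pi]

lemma rad_one_left {t : ℝ} (h0 : 0 < t) (h1 : t < 1 / 2) : rademacher 1 t = 1 := by
  unfold rademacher
  apply Real.sign_of_pos
  apply Real.sin_pos_of_pos_of_lt_pi
  · have := Real.pi_pos; positivity
  · have := Real.pi_pos; nlinarith

lemma rad_one_right {t : ℝ} (h0 : 1 / 2 < t) (h1 : t < 1) : rademacher 1 t = -1 := by
  unfold rademacher
  apply Real.sign_of_neg
  have h2 : (2:ℝ) ^ 1 * Real.pi * t = 2 * Real.pi * t - 2 * Real.pi + 2 * Real.pi := by ring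
  rw [h2, Real.sin_add_two_pi]
  have := Real.pi_pos
  apply Real.sin_neg_of_neg_of_neg_pi_lt <;> nlinarith

/-- bounded measurable functions are interval integrable -/
lemma ii_of_bdd {f : ℝ → ℝ} (hf : Measurable f) {B : ℝ} (hB : ∀ t, |f t| ≤ B) (a b : ℝ) :
    IntervalIntegrable f volume a b := by
  apply (intervalIntegrable_const (c := B) (μ := volume) (a := a) (b := b)).mono_fun
    hf.aestronglyMeasurable
  filter_upwards with t
  rw [Real.norm_eq_abs, Real.norm_eq_abs]
  exact (hB t).trans (le_abs_self B)

lemma prod_meas (g : ℕ → ℝ → ℝ) (hg : ∀ k, Measurable (g k)) (M : ℕ) (l : ℕ → ℕ) :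
    Measurable (fun t => ∏ k ∈ range M, g k (rademacher (l k) t)) :=
  Finset.measurable_fun_prod _ fun k _ => (hg k).comp (rad_meas _)

lemma prod_bdd (g : ℕ → ℝ → ℝ) (M : ℕ) (l : ℕ → ℕ) (t : ℝ) :
    |∏ k ∈ range M, g k (rademacher (l k) t)| ≤
      ∏ k ∈ range M, (|g k (-1)| + |g k 0| + |g k 1|) := by
  rw [Finset.abs_prod]
  apply Finset.prod_le_prod
  · intros; positivity
  · intro k _
    have h1 := abs_nonneg (g k (-1))
    have h2 := abs_nonneg (g k 0)
    have h3 := abs_nonneg (g k 1)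
    rcases rad_cases (l k) t with h | h | h <;> rw [h] <;> linarith

theorem prodE (M : ℕ) (g : ℕ → ℝ → ℝ) (hg : ∀ k, Measurable (g k)) :
    ∫ t in (0:ℝ)..1, ∏ k ∈ range M, g k (rademacher (k + 1) t)
      = ∏ k ∈ range M, (g k 1 + g k (-1)) / 2 := by
  induction M generalizing g with
  | zero => simp
  | succ M ih =>
    have hm := prod_meas g hg (M + 1) (fun k => k + 1)
    have hb := prod_bdd g (M + 1) (fun k => k + 1)
    rw [← intervalIntegral.integral_add_adjacent_intervals
      (ii_of_bdd hm hb 0 (1/2)) (ii_of_bdd hm hb (1/2) 1)]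
    set H : ℝ → ℝ := fun t => ∏ k ∈ range M, g (k + 1) (rademacher (k + 1) t) with hH
    have hHp : Function.Periodic H 1 := by
      intro t
      simp only [hH, rad_period]
    have key : ∀ t, ∏ k ∈ range (M + 1), g k (rademacher (k + 1) t)
        = H (2 * t) * g 0 (rademacher 1 t) := by
      intro t
      rw [Finset.prod_range_succ']
      simp only [hH, rad_double (_ + 1) t, zero_add]
    have e1 : ∫ t in (0:ℝ)..(1/2), ∏ k ∈ range (M + 1), g k (rademacher (k + 1) t)
        = ∫ t in (0:ℝ)..(1/2), H (2 * t) * g 0 1 := by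
      apply intervalIntegral.integral_congr_ae
      have : ∀ᵐ t : ℝ, t ≠ 1/2 := by simp [ae_iff, measure_singleton]
      filter_upwards [this] with t ht h
      rw [Set.uIoc_of_le (by norm_num)] at h
      rw [key, rad_one_left h.1 (lt_of_le_of_ne h.2 ht)]
    have e2 : ∫ t in (1/2:ℝ)..1, ∏ k ∈ range (M + 1), g k (rademacher (k + 1) t)
        = ∫ t in (1/2:ℝ)..1, H (2 * t) * g 0 (-1) := by
      apply intervalIntegral.integral_congr_ae
      have : ∀ᵐ t : ℝ, t ≠ 1 := by simp [ae_iff, measure_singleton]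
      filter_upwards [this] with t ht h
      rw [Set.uIoc_of_le (by norm_num)] at h
      rw [key, rad_one_right h.1 (lt_of_le_of_ne h.2 ht)]
    have hI : ∫ t in (0:ℝ)..1, H t = ∏ k ∈ range M, (g (k+1) 1 + g (k+1) (-1)) / 2 :=
      ih (fun k => g (k + 1)) (fun k => hg _)
    have hI2 : ∫ t in (1:ℝ)..2, H t = ∫ t in (0:ℝ)..1, H t := by
      have := hHp.intervalIntegral_add_eq 1 0
      norm_num at this
      exact this
    rw [e1, e2, intervalIntegral.integral_mul_const, intervalIntegral.integral_mul_const,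
      intervalIntegral.integral_comp_mul_left H (two_ne_zero),
      intervalIntegral.integral_comp_mul_left H (two_ne_zero), Finset.prod_range_succ', ← hI]
    norm_num
    rw [hI2]
    ring

/-- product formula for arbitrary index families -/
theorem prodE' {ι : Type*} (R : Finset ι) (l : ι → ℕ) (hl : Set.InjOn l R)
    (g : ι → ℝ → ℝ) (hg : ∀ k, Measurable (g k)) :
    ∫ t in (0:ℝ)..1, ∏ x ∈ R, g x (rademacher (l x + 1) t)
      = ∏ x ∈ R, (g x 1 + g x (-1)) / 2 := by
  classical
  rcases R.eq_empty_or_nonempty with rfl | ⟨x0, hx0⟩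
  · simp
  have : Nonempty ι := ⟨x0⟩
  obtain ⟨M, hM⟩ : ∃ M, R.image l ⊆ range M := Finset.exists_nat_subset_range _
  set inv := Function.invFunOn l (R : Set ι)
  have hinv : ∀ x ∈ R, inv (l x) = x := fun x hx =>
    hl.leftInvOn_invFunOn (by exact_mod_cast hx)
  let G : ℕ → ℝ → ℝ := fun k => if k ∈ R.image l then g (inv k) else fun _ => 1
  have hG : ∀ k, Measurable (G k) := by
    intro k
    simp only [G]
    split_ifs
    · exact hg _
    · exact measurable_const
  have h := prodE M G hG
  have conv : ∀ (φ : (ℝ → ℝ) → ℕ → ℝ), (∀ k, φ (fun _ => 1) k = 1) →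
      ∏ k ∈ range M, φ (G k) k = ∏ x ∈ R, φ (g x) (l x) := by
    intro φ hφ
    rw [← Finset.prod_subset hM, Finset.prod_image hl]
    · apply Finset.prod_congr rfl
      intro x hx
      simp only [G, if_pos (Finset.mem_image_of_mem l hx), hinv x hx]
    · intro k _ hk
      simp only [G, if_neg hk, hφ]
  rw [conv (fun u _ => (u 1 + u (-1)) / 2) (by intro; norm_num)] at h
  rw [← h]
  congr 1
  ext t
  exact (conv (fun u k => u (rademacher (k + 1) t)) (by intro; rfl)).symm

lemma walsh_eq (n M : ℕ) (h : n ≤ M) (t : ℝ) :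
    walsh n t = ∏ j ∈ range M, if n.testBit j then rademacher (j + 1) t else 1 := by
  unfold walsh
  apply Finset.prod_subset (Finset.range_mono h)
  intro j _ hj
  have hj' : n ≤ j := by simpa using hj
  rw [Nat.testBit_lt_two_pow (lt_of_lt_of_le Nat.lt_two_pow_self (Nat.pow_le_pow_right two_pos hj'))]
  simp

lemma walsh_meas (n : ℕ) : Measurable (walsh n) := by
  unfold walsh
  refine Finset.measurable_fun_prod _ fun k _ => ?_
  split_ifs
  · exact rad_meas _
  · exact measurable_const

lemma walsh_abs (n : ℕ) (t : ℝ) : |walsh n t| ≤ 1 := by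
  unfold walsh
  rw [Finset.abs_prod]
  apply Finset.prod_le_one
  · intros; positivity
  · intro i _
    split_ifs
    · exact rad_abs _ _
    · simp

lemma walsh_two_pow (l : ℕ) (t : ℝ) : walsh (2 ^ l) t = rademacher (l + 1) t := by
  unfold walsh
  rw [Finset.prod_eq_single l]
  · simp
  · intro b _ hb
    rw [Nat.testBit_two_pow_of_ne (Ne.symm hb)]
    simp
  · intro h
    exact absurd (Finset.mem_range.2 Nat.lt_two_pow_self) h

lemma walsh_orth (m n : ℕ) :
    ∫ t in (0:ℝ)..1, walsh m t * walsh n t = if m = n then 1 else 0 := by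
  have hw : ∀ t, walsh m t * walsh n t = ∏ j ∈ range (max m n),
      (fun (j : ℕ) (y : ℝ) => (if m.testBit j then y else 1) * (if n.testBit j then y else 1)) j
        (rademacher (j + 1) t) := by
    intro t
    rw [walsh_eq m (max m n) (le_max_left _ _), walsh_eq n (max m n) (le_max_right _ _),
      ← Finset.prod_mul_distrib]
  refine (intervalIntegral.integral_congr (fun t _ => hw t)).trans ((prodE _
    (fun (j : ℕ) (y : ℝ) => (if m.testBit j then y else 1) * (if n.testBit j then y else 1))
    ?_).trans ?_)
  rotate_left
  · split_ifs with h
    · subst h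
      apply Finset.prod_eq_one
      intro j _
      split_ifs <;> norm_num
    · obtain ⟨j, hj⟩ := Nat.exists_testBit_ne_of_ne h
      have hjM : j ∈ range (max m n) := by
        rw [Finset.mem_range]
        by_contra hc
        push Not at hc
        have h1 : m.testBit j = false := Nat.testBit_lt_two_pow (lt_of_lt_of_le Nat.lt_two_pow_self
          (Nat.pow_le_pow_right two_pos ((le_max_left _ _).trans hc)))
        have h2 : n.testBit j = false := Nat.testBit_lt_two_pow (lt_of_lt_of_le Nat.lt_two_pow_self
          (Nat.pow_le_pow_right two_pos ((le_max_right _ _).trans hc)))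
        exact hj (h1.trans h2.symm)
      apply Finset.prod_eq_zero hjM
      cases h1 : m.testBit j <;> cases h2 : n.testBit j <;> simp_all
  · intro k
    split_ifs <;> fun_prop

/-- column levels -/
lemma sum_levels (k : ℕ) (f : ℕ → ℝ) :
    ∑ j ∈ Icc 1 (2 ^ k), f j = f 1 + ∑ s ∈ range k, ∑ v ∈ range (2 ^ s), f (2 ^ s + v + 1) := by
  induction k with
  | zero => simp
  | succ k ih =>
    rw [Finset.sum_range_succ, ← add_assoc, ← ih]
    have h1 : ∀ n, ∑ j ∈ Icc 1 n, f j = ∑ j ∈ range n, f (j + 1) := by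
      intro n
      rw [Finset.sum_bij (fun j _ => j - 1)]
      · intro a ha; simp at ha ⊢; omega
      · intro a ha b hb h; simp at ha hb; omega
      · intro b hb; exact ⟨b + 1, by simp at hb ⊢; omega, by simp⟩
      · intro a ha; simp at ha; congr 1; omega
    rw [h1, h1, pow_succ, mul_two, Finset.sum_range_add]

def sg (k i s : ℕ) : ℝ := if (i / 2 ^ (k - s - 1)) % 2 = 0 then 1 else -1

lemma olev_one (k i : ℕ) : olevskii k i 1 = (2:ℝ) ^ (-(k:ℝ) / 2) := by simp [olevskii]

lemma olev_level (k i s v : ℕ) (hs : s < k) (hv : v < 2 ^ s) :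
    olevskii k (i + 1) (2 ^ s + v + 1) =
      if v = i / 2 ^ (k - s) then (2:ℝ) ^ (((s:ℝ) - k) / 2) * sg k i s else 0 := by
  have hp : 0 < 2 ^ s := by positivity
  have hlog : Nat.log 2 (2 ^ s + v + 1 - 1) = s := by
    rw [Nat.log_eq_iff (Or.inr ⟨by norm_num, by omega⟩)]
    constructor
    · omega
    · rw [pow_succ]; omega
  unfold olevskii
  rw [if_neg (by omega)]
  simp only [hlog]
  have hν : 2 ^ s + v + 1 - 2 ^ s = v + 1 := by omega
  rw [hν]
  obtain ⟨d, hd⟩ : ∃ d, k - s = d + 1 := ⟨k - s - 1, by omega⟩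
  have hd' : k - s - 1 = d := by omega
  unfold sg
  rw [hd', hd]
  have hD : 0 < 2 ^ d := by positivity
  have hdiv : i / 2 ^ (d + 1) = i / 2 ^ d / 2 := by rw [pow_succ, Nat.div_div_eq_div_mul]
  set q := i / 2 ^ d with hq
  have hq1 : q * 2 ^ d ≤ i := Nat.div_mul_le_self _ _
  have hq2 : i < (q + 1) * 2 ^ d := by
    rw [← Nat.div_lt_iff_lt_mul hD]; omega
  have e1 : (v + 1 - 1) * 2 ^ (d + 1) = (2 * v) * 2 ^ d := by
    rw [pow_succ]; simp; ring
  have e2 : (2 * (v + 1) - 1) * 2 ^ d = (2 * v + 1) * 2 ^ d := by congr 1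
  have e3 : (v + 1) * 2 ^ (d + 1) = (2 * v + 2) * 2 ^ d := by
    rw [pow_succ]; ring
  rw [e1, e2, e3, hdiv]
  have lem : ∀ c, c * 2 ^ d < i + 1 ↔ c ≤ q := by
    intro c
    rw [hq, Nat.le_div_iff_mul_le hD]; omega
  have lem2 : ∀ c, i + 1 ≤ c * 2 ^ d ↔ q < c := by
    intro c
    rw [hq, Nat.div_lt_iff_lt_mul hD]; omega
  simp only [lem, lem2]
  by_cases hv' : v = q / 2
  · rw [if_pos hv']
    by_cases hm : q % 2 = 0
    · rw [if_pos (by omega), if_pos hm, mul_one]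
    · rw [if_neg (by omega), if_pos (by omega), if_neg hm]; ring
  · rw [if_neg hv', if_neg (by omega), if_neg (by omega)]

lemma olev_orth (k i i' : ℕ) (hi : i < 2 ^ k) (hi' : i' < 2 ^ k) :
    ∑ j ∈ Icc 1 (2 ^ k), olevskii k (i + 1) j * olevskii k (i' + 1) j
      = if i = i' then 1 else 0 := by
  rw [sum_levels]
  have hsq : ∀ s : ℝ, ((2:ℝ) ^ ((s - k) / 2)) * ((2:ℝ) ^ ((s - k) / 2)) = 2 ^ s * (2 ^ k)⁻¹ := by
    intro s
    rw [← Real.rpow_add two_pos, add_halves, Real.rpow_sub two_pos, Real.rpow_natCast]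
    rfl
  have hlev : ∀ s ∈ range k, ∑ v ∈ range (2 ^ s),
      olevskii k (i + 1) (2 ^ s + v + 1) * olevskii k (i' + 1) (2 ^ s + v + 1)
      = (2 ^ k)⁻¹ * (2 ^ s * (if i / 2 ^ (k - s) = i' / 2 ^ (k - s) then
          sg k i s * sg k i' s else 0)) := by
    intro s hs
    have hs' : s < k := Finset.mem_range.1 hs
    have hb : i / 2 ^ (k - s) < 2 ^ s := by
      rw [Nat.div_lt_iff_lt_mul (by positivity), ← pow_add]
      rwa [show s + (k - s) = k by omega]
    rw [Finset.sum_eq_single (i / 2 ^ (k - s))]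
    · rw [olev_level k i s _ hs' hb, olev_level k i' s _ hs' hb, if_pos rfl]
      split_ifs with h
      · have := hsq s
        rw [Real.rpow_natCast] at this
        linear_combination (sg k i s * sg k i' s) * this
      · ring
    · intro v hv hne
      rw [olev_level k i s _ hs' (Finset.mem_range.1 hv), if_neg hne, zero_mul]
    · intro h; exact absurd (Finset.mem_range.2 hb) h
  rw [Finset.sum_congr rfl hlev, ← Finset.mul_sum, olev_one, olev_one]
  have h0 := hsq 0
  rw [zero_sub, Real.rpow_zero, one_mul] at h0
  rw [h0]
  have tel : ∀ S, S ≤ k → 1 + ∑ s ∈ range S, (2:ℝ) ^ s *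
      (if i / 2 ^ (k - s) = i' / 2 ^ (k - s) then sg k i s * sg k i' s else 0)
      = if i / 2 ^ (k - S) = i' / 2 ^ (k - S) then (2:ℝ) ^ S else 0 := by
    intro S
    induction S with
    | zero =>
      intro _
      simp [Nat.div_eq_of_lt hi, Nat.div_eq_of_lt hi']
    | succ S ih =>
      intro hS
      rw [Finset.sum_range_succ, ← add_assoc, ih (by omega)]
      obtain ⟨d, hd⟩ : ∃ d, k - S = d + 1 := ⟨k - S - 1, by omega⟩
      have hd' : k - (S + 1) = d := by omega
      have hd'' : k - S - 1 = d := by omega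
      unfold sg
      rw [hd'', hd', hd]
      have hdiv : ∀ i, i / 2 ^ (d + 1) = i / 2 ^ d / 2 := by
        intro i; rw [pow_succ, Nat.div_div_eq_div_mul]
      rw [hdiv, hdiv]
      generalize i / 2 ^ d = a
      generalize i' / 2 ^ d = b
      rcases Nat.mod_two_eq_zero_or_one a with ha | ha <;>
      rcases Nat.mod_two_eq_zero_or_one b with hb | hb <;>
      by_cases hab : a / 2 = b / 2
      all_goals first
        | (have : a = b := by omega); simp [ha, hb, hab, this, pow_succ]; try ring
        | (have : a ≠ b := by omega); simp [ha, hb, hab, this]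
  have := tel k le_rfl
  rw [Nat.sub_self, pow_zero, Nat.div_one, Nat.div_one] at this
  rw [show ∀ a b : ℝ, a⁻¹ + a⁻¹ * b = a⁻¹ * (1 + b) by intros; ring, this]
  split_ifs
  · field_simp
  · ring

/-- lacunary summation -/
lemma lac (u : ℕ → ℝ) (hu0 : ∀ k, 0 < u k) (hu : ∀ k, 2 * u k ≤ u (k + 1)) (x : ℝ) (hx : 0 < x)
    (a : ℕ → ℝ) (h1 : ∀ k, a k ≤ u k) (h2 : ∀ k, a k ≤ x ^ 2 / u k) (K : ℕ) :
    ∑ k ∈ range K, a k ≤ 4 * x := by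
  have key : ∑ k ∈ range K, a k ≤ u K ∧
      (x ≤ u K → ∑ k ∈ range K, a k ≤ 4 * x - 2 * (x ^ 2 / u K)) := by
    have hq : ∀ K, x ≤ u K → x ^ 2 / u K ≤ x := by
      intro K h
      rw [div_le_iff₀ (hu0 K)]; nlinarith
    induction K with
    | zero =>
      refine ⟨by simpa using (hu0 0).le, fun h => ?_⟩
      have := hq 0 h
      simp only [Finset.range_zero, Finset.sum_empty]; linarith
    | succ K ih =>
      rw [Finset.sum_range_succ]
      refine ⟨by linarith [ih.1, h1 K, hu K], fun h => ?_⟩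
      rcases le_total x (u K) with hc | hc
      · have a1 := ih.2 hc
        have a2 := h2 K
        have a3 : 2 * (x ^ 2 / u (K + 1)) ≤ x ^ 2 / u K := by
          rw [← mul_div_assoc, div_le_div_iff₀ (hu0 _) (hu0 _)]
          nlinarith [hu K, sq_nonneg x]
        linarith
      · linarith [ih.1, h1 K, hq _ h]
  rcases le_total x (u K) with hc | hc
  · have := key.2 hc
    have : 0 ≤ x ^ 2 / u K := div_nonneg (sq_nonneg _) (hu0 K).le
    linarith
  · linarith [key.1]

section analytic

variable {ι : Type*}

lemma exp_bound (R : Finset ι) (l : ι → ℕ) (hl : Set.InjOn l R) (b : ι → ℝ)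
    (hb : ∑ x ∈ R, b x ^ 2 ≤ 1) :
    ∫ t in (0:ℝ)..1, Real.exp (∑ x ∈ R, b x * rademacher (l x + 1) t) ≤ Real.exp (1 / 2) := by
  have h := prodE' R l hl (fun x y => Real.exp (b x * y)) (by intro; fun_prop)
  simp only [← Real.exp_sum] at h
  rw [h]
  calc ∏ x ∈ R, (Real.exp (b x * 1) + Real.exp (b x * -1)) / 2
      ≤ ∏ x ∈ R, Real.exp (b x ^ 2 / 2) := by
        apply Finset.prod_le_prod
        · intros; positivity
        · intro x _
          have := Real.cosh_le_exp_half_sq (b x)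
          rw [Real.cosh_eq] at this
          simpa using this
    _ = Real.exp (∑ x ∈ R, b x ^ 2 / 2) := (Real.exp_sum _ _).symm
    _ ≤ Real.exp (1 / 2) := by
        rw [← Finset.sum_div]
        apply Real.exp_le_exp.2
        linarith

lemma sum_meas (R : Finset ι) (w : ι → ℕ) (b : ι → ℝ) :
    Measurable (fun t => ∑ x ∈ R, b x * walsh (w x) t) :=
  Finset.measurable_fun_sum _ fun x _ => (walsh_meas _).const_mul _

lemma sum_bdd (R : Finset ι) (w : ι → ℕ) (b : ι → ℝ) (t : ℝ) :
    |∑ x ∈ R, b x * walsh (w x) t| ≤ ∑ x ∈ R, |b x| := by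
  refine (Finset.abs_sum_le_sum_abs _ _).trans (Finset.sum_le_sum fun x _ => ?_)
  rw [abs_mul]
  exact mul_le_of_le_one_right (abs_nonneg _) (walsh_abs _ _)

lemma comp_ii (R : Finset ι) (w : ι → ℕ) (b : ι → ℝ) (Φ : ℝ → ℝ) (hΦ : Continuous Φ) :
    IntervalIntegrable (fun t => Φ (∑ x ∈ R, b x * walsh (w x) t)) volume 0 1 := by
  obtain ⟨B, hB⟩ := (isCompact_Icc (a := -∑ x ∈ R, |b x|) (b := ∑ x ∈ R, |b x|)).exists_bound_of_continuousOn
    hΦ.continuousOn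
  apply ii_of_bdd (hΦ.measurable.comp (sum_meas R w b)) (B := B)
  intro t
  exact hB _ (abs_le.1 (sum_bdd R w b t))

lemma sq_int (S : Finset ι) (w : ι → ℕ) (hw : Set.InjOn w S) (b : ι → ℝ) :
    ∫ t in (0:ℝ)..1, (∑ x ∈ S, b x * walsh (w x) t) ^ 2 = ∑ x ∈ S, b x ^ 2 := by
  classical
  have h : ∀ t, (∑ x ∈ S, b x * walsh (w x) t) ^ 2
      = ∑ x ∈ S, ∑ y ∈ S, b x * b y * (walsh (w x) t * walsh (w y) t) := by
    intro t
    rw [sq, Finset.sum_mul_sum]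
    refine Finset.sum_congr rfl fun x _ => Finset.sum_congr rfl fun y _ => by ring
  have hii : ∀ x y, IntervalIntegrable
      (fun t => b x * b y * (walsh (w x) t * walsh (w y) t)) volume 0 1 := by
    intro x y
    apply IntervalIntegrable.const_mul
    apply ii_of_bdd ((walsh_meas _).mul (walsh_meas _)) (B := 1)
    intro t
    rw [Pi.mul_apply, abs_mul]
    exact mul_le_one₀ (walsh_abs _ _) (abs_nonneg _) (walsh_abs _ _)
  simp_rw [h]
  rw [intervalIntegral.integral_finsetSum]
  · refine Finset.sum_congr rfl fun x hx => ?_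
    rw [intervalIntegral.integral_finsetSum (fun y _ => hii x y)]
    simp_rw [intervalIntegral.integral_const_mul, walsh_orth]
    rw [Finset.sum_eq_single x]
    · simp; ring
    · intro y hy hne
      rw [if_neg (fun h => hne (hw hy hx h.symm)), mul_zero]
    · intro h; exact absurd hx h
  · intro x _
    have e : (fun t => ∑ y ∈ S, b x * b y * (walsh (w x) t * walsh (w y) t))
        = ∑ y ∈ S, fun t => b x * b y * (walsh (w x) t * walsh (w y) t) := by
      ext t
      simp
    rw [e]
    exact IntervalIntegrable.sum S (fun y _ => hii x y)

lemma exp_abs_bound (S : Finset ι) (P : ι → Prop) [DecidablePred P] (w : ι → ℕ) (l : ι → ℕ)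
    (hl : Set.InjOn l (S.filter fun x => ¬ P x)) (hwl : ∀ x ∈ S, ¬ P x → w x = 2 ^ l x)
    (b : ι → ℝ) (hb : ∑ x ∈ S, b x ^ 2 = 1) (hY : ∑ x ∈ S.filter P, |b x| ≤ 4) :
    ∫ t in (0:ℝ)..1, Real.exp |∑ x ∈ S, b x * walsh (w x) t| ≤
      Real.exp 4 * (2 * Real.exp (1 / 2)) := by
  set R := S.filter fun x => ¬ P x with hR
  have hRS : ∑ x ∈ R, b x ^ 2 ≤ 1 := by
    rw [← hb]
    exact Finset.sum_le_sum_of_subset_of_nonneg (Finset.filter_subset _ _)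
      (fun _ _ _ => sq_nonneg _)
  have e1 := exp_bound R l hl b hRS
  have e2 := exp_bound R l hl (fun x => - b x) (by simpa using hRS)
  have hX : ∀ t, ∑ x ∈ R, b x * walsh (w x) t = ∑ x ∈ R, b x * rademacher (l x + 1) t := by
    intro t
    refine Finset.sum_congr rfl fun x hx => ?_
    rw [hR, Finset.mem_filter] at hx
    rw [hwl x hx.1 hx.2, walsh_two_pow]
  have e2' : ∫ t in (0:ℝ)..1, Real.exp (-∑ x ∈ R, b x * walsh (w x) t) ≤ Real.exp (1/2) := by
    simpa only [hX, neg_mul, Finset.sum_neg_distrib] using e2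
  have e1' : ∫ t in (0:ℝ)..1, Real.exp (∑ x ∈ R, b x * walsh (w x) t) ≤ Real.exp (1/2) := by
    simpa only [hX] using e1
  have i1 := comp_ii R w b (fun y => Real.exp y) (by fun_prop)
  have i2 := comp_ii R w b (fun y => Real.exp (-y)) (by fun_prop)
  calc ∫ t in (0:ℝ)..1, Real.exp |∑ x ∈ S, b x * walsh (w x) t|
      ≤ ∫ t in (0:ℝ)..1, Real.exp 4 * (Real.exp (∑ x ∈ R, b x * walsh (w x) t)
          + Real.exp (-∑ x ∈ R, b x * walsh (w x) t)) := by
        apply intervalIntegral.integral_mono_on zero_le_one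
          (comp_ii S w b (fun y => Real.exp |y|) (by fun_prop)) ((i1.add i2).const_mul _)
        intro t _
        rw [← Finset.sum_filter_add_sum_filter_not S P]
        have h1 := (sum_bdd (S.filter P) w b t).trans hY
        set Y := ∑ x ∈ S.filter P, b x * walsh (w x) t
        set X := ∑ x ∈ R, b x * walsh (w x) t
        calc Real.exp |Y + X| ≤ Real.exp (4 + |X|) :=
              Real.exp_le_exp.2 ((abs_add_le _ _).trans (by linarith))
          _ = Real.exp 4 * Real.exp |X| := Real.exp_add _ _
          _ ≤ _ := by
            gcongr
            exact Real.exp_abs_le X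
    _ = Real.exp 4 * ((∫ t in (0:ℝ)..1, Real.exp (∑ x ∈ R, b x * walsh (w x) t))
          + ∫ t in (0:ℝ)..1, Real.exp (-∑ x ∈ R, b x * walsh (w x) t)) := by
        rw [intervalIntegral.integral_const_mul, intervalIntegral.integral_add i1 i2]
    _ ≤ _ := by
        gcongr
        linarith

lemma rpow_le_exp (p : ℝ) (hp : 1 < p) (y : ℝ) (hy : 0 ≤ y) : y ^ p ≤ p ^ p * Real.exp y := by
  have hp0 : 0 < p := by linarith
  have h : y ≤ p * Real.exp (y / p) := by
    have := Real.add_one_le_exp (y / p)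
    have h2 : y = p * (y / p) := by field_simp
    nlinarith
  calc y ^ p ≤ (p * Real.exp (y / p)) ^ p := Real.rpow_le_rpow hy h hp0.le
    _ = p ^ p * Real.exp y := by
      rw [Real.mul_rpow hp0.le (Real.exp_pos _).le, ← Real.exp_mul, div_mul_cancel₀ _ hp0.ne']

noncomputable def EE : ℝ := Real.exp 4 * (2 * Real.exp (1 / 2))
lemma EE_pos : 0 < EE := by unfold EE; positivity

lemma moments (p : ℝ) (hp : 1 < p) (S : Finset ι) (w : ι → ℕ) (b : ι → ℝ)
    (h2 : ∫ t in (0:ℝ)..1, (∑ x ∈ S, b x * walsh (w x) t) ^ 2 = 1)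
    (hE : ∫ t in (0:ℝ)..1, Real.exp |∑ x ∈ S, b x * walsh (w x) t| ≤ EE) :
    1 / (2 * (4 * (256 * EE) * 2 ^ p)) ≤ ∫ t in (0:ℝ)..1, |∑ x ∈ S, b x * walsh (w x) t| ^ p ∧
    ∫ t in (0:ℝ)..1, |∑ x ∈ S, b x * walsh (w x) t| ^ p ≤ p ^ p * EE := by
  have hp0 : 0 < p := by linarith
  have iE := comp_ii S w b (fun y => Real.exp |y|) (by fun_prop)
  have ip := comp_ii S w b (fun y => |y| ^ p)
    (continuous_abs.rpow_const (fun _ => Or.inr hp0.le))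
  have i2 := comp_ii S w b (fun y => y ^ 2) (by fun_prop)
  have i4 := comp_ii S w b (fun y => y ^ 4) (by fun_prop)
  set g : ℝ → ℝ := fun t => ∑ x ∈ S, b x * walsh (w x) t with hg
  have ub : ∀ q : ℝ, 1 < q → IntervalIntegrable (fun t => |g t| ^ q) volume 0 1 →
      ∫ t in (0:ℝ)..1, |g t| ^ q ≤ q ^ q * EE := by
    intro q hq iq
    calc ∫ t in (0:ℝ)..1, |g t| ^ q ≤ ∫ t in (0:ℝ)..1, q ^ q * Real.exp |g t| := by
          apply intervalIntegral.integral_mono_on zero_le_one iq (iE.const_mul _)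
          intro t _
          exact rpow_le_exp q hq _ (abs_nonneg _)
      _ = q ^ q * ∫ t in (0:ℝ)..1, Real.exp |g t| := intervalIntegral.integral_const_mul _ _
      _ ≤ q ^ q * EE := by gcongr
  have e4 : ∀ y : ℝ, |y| ^ (4:ℝ) = y ^ 4 := by
    intro y
    rw [show (4:ℝ) = ((4:ℕ):ℝ) by norm_num, Real.rpow_natCast]
    exact Even.pow_abs (by decide) y
  have m4 : ∫ t in (0:ℝ)..1, g t ^ 4 ≤ 256 * EE := by
    have := ub 4 (by norm_num) (by simpa only [e4] using i4)
    simp only [e4] at this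
    have h : (4:ℝ) ^ (4:ℝ) = 256 := by
      rw [show (4:ℝ) ^ (4:ℝ) = (4:ℝ) ^ ((4:ℕ):ℝ) by norm_num, Real.rpow_natCast]; norm_num
    rwa [h] at this
  refine ⟨?_, ub p hp ip⟩
  have hEp := EE_pos
  set L := 4 * (256 * EE) with hL
  have hLp : 0 < L := by positivity
  have h2p : (0:ℝ) < 2 ^ p := by positivity
  have pt : ∀ y : ℝ, y ^ 2 ≤ 1 / 4 + y ^ 4 * (1 / L) + (L * 2 ^ p) * |y| ^ p := by
    intro y
    have n1 : 0 ≤ y ^ 4 * (1 / L) := by positivity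
    have n2 : 0 ≤ (L * 2 ^ p) * |y| ^ p := by positivity
    by_cases c1 : |y| ≤ 1 / 2
    · have : y ^ 2 ≤ 1 / 4 := by
        rw [← sq_abs]; nlinarith [abs_nonneg y]
      linarith
    · by_cases c2 : y ^ 2 ≤ L
      · have h1 : 1 ≤ 2 ^ p * |y| ^ p := by
          rw [← Real.mul_rpow (by norm_num) (abs_nonneg _)]
          apply Real.one_le_rpow _ hp0.le
          linarith
        nlinarith
      · have : y ^ 2 ≤ y ^ 4 * (1 / L) := by
          rw [mul_one_div, le_div_iff₀ hLp]
          nlinarith [sq_nonneg y]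
        linarith
  have hint : ∫ t in (0:ℝ)..1, g t ^ 2 ≤
      ∫ t in (0:ℝ)..1, (1 / 4 + g t ^ 4 * (1 / L) + (L * 2 ^ p) * |g t| ^ p) := by
    apply intervalIntegral.integral_mono_on zero_le_one i2
      ((intervalIntegrable_const.add (i4.mul_const _)).add (ip.const_mul _))
    intro t _
    exact pt (g t)
  rw [intervalIntegral.integral_add (intervalIntegrable_const.add (i4.mul_const _))
    (ip.const_mul _), intervalIntegral.integral_add intervalIntegrable_const (i4.mul_const _),
    intervalIntegral.integral_const_mul, intervalIntegral.integral_mul_const, h2] at hint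
  simp only [intervalIntegral.integral_const, sub_zero, one_smul] at hint
  have q4 : (∫ t in (0:ℝ)..1, g t ^ 4) * (1 / L) ≤ 1 / 4 := by
    rw [mul_one_div, div_le_iff₀ hLp, hL]
    linarith
  rw [div_le_iff₀ (by positivity)]
  linarith

end analytic

/-- zero-based block number of `psi m` -/
noncomputable def qq (m : ℕ) : ℕ :=
  Nat.find (show ∃ k, m + 1 ≤ cum k from ⟨m + 1, le_cum (m + 1)⟩) - 1

noncomputable def ii (m : ℕ) : ℕ := m - cum (qq m)

lemma qq_spec (m : ℕ) : cum (qq m) ≤ m ∧ m < cum (qq m) + Nn (qq m + 1) ∧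
    psi m = psiBlock (qq m + 1) (ii m + 1) := by
  have hex : ∃ k, m + 1 ≤ cum k := ⟨m + 1, le_cum (m + 1)⟩
  have hs := Nat.find_spec hex
  have hpos : 0 < Nat.find hex := by
    rw [Nat.find_pos]; simp [cum]
  have hq : Nat.find hex = qq m + 1 := by unfold qq; omega
  have hmin := Nat.find_min hex (m := qq m) (by omega)
  rw [hq] at hs
  simp only [cum] at hs
  have hle : cum (qq m) ≤ m := by omega
  refine ⟨hle, by omega, ?_⟩
  unfold psi
  dsimp only
  rw [show Nat.find (show ∃ k, m + 1 ≤ cum k from ⟨m + 1, le_cum (m + 1)⟩) = qq m + 1 from hq]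
  congr 1
  unfold ii
  simp only [Nat.add_sub_cancel]
  omega

lemma ii_lt (m : ℕ) : ii m < Nn (qq m + 1) := by
  have := qq_spec m
  unfold ii; omega

lemma qi_inj {m m' : ℕ} (h1 : qq m = qq m') (h2 : ii m = ii m') : m = m' := by
  have a := (qq_spec m).1
  have b := (qq_spec m').1
  unfold ii at h2
  rw [h1] at h2 a
  omega

def SS (K : ℕ) : Finset (Σ _ : ℕ, ℕ) := (range K).sigma fun q => Icc 1 (Nn (q + 1))

noncomputable def nn (q : ℕ) : ℕ := Nat.nth (fun n => ¬ ∃ m : ℕ, n = 2 ^ m) q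

def ll (x : Σ _ : ℕ, ℕ) : ℕ := Fn x.1 + x.2 - 2

noncomputable def ww (x : Σ _ : ℕ, ℕ) : ℕ := if x.2 = 1 then nn x.1 else 2 ^ ll x

noncomputable def cf (m : ℕ) (x : Σ _ : ℕ, ℕ) : ℝ :=
  if x.1 = qq m then olevskii (10 ^ (qq m + 1)) (ii m + 1) x.2 else 0

lemma inf_np : (setOf fun n : ℕ => ¬ ∃ m : ℕ, n = 2 ^ m).Infinite := by
  apply Set.infinite_of_injective_forall_mem (f := fun n : ℕ => 2 * n + 3)
  · intro a b h; simp at h; exact h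
  · rintro n ⟨m, hm⟩
    cases m with
    | zero => simp at hm
    | succ m => rw [pow_succ] at hm; omega

lemma nn_inj : Function.Injective nn := Nat.nth_injective inf_np

lemma nn_ne (q l : ℕ) : nn q ≠ 2 ^ l := fun h =>
  (Nat.nth_mem_of_infinite inf_np q) ⟨l, h⟩

lemma Nn_pos (k : ℕ) : 1 ≤ Nn k := Nat.one_le_two_pow

lemma Fn_mono : Monotone Fn := by
  apply monotone_nat_of_le_succ
  intro k
  have := Nn_pos (k + 1)
  simp only [Fn]; omega

lemma ll_inj {q j q' j' : ℕ} (h1 : 2 ≤ j) (h2 : j ≤ Nn (q + 1)) (h1' : 2 ≤ j')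
    (h2' : j' ≤ Nn (q' + 1)) (h : Fn q + j - 2 = Fn q' + j' - 2) : q = q' ∧ j = j' := by
  have e : ∀ q, Fn (q + 1) = Fn q + Nn (q + 1) - 1 := fun q => rfl
  rcases lt_trichotomy q q' with hl | hl | hl
  · have := Fn_mono (show q + 1 ≤ q' from hl)
    have := e q
    omega
  · subst hl; exact ⟨rfl, by omega⟩
  · have := Fn_mono (show q' + 1 ≤ q from hl)
    have := e q'
    omega

lemma ll_injOn (K : ℕ) : Set.InjOn ll ((SS K).filter fun x => ¬ x.2 = 1) := by
  rintro ⟨q, j⟩ hx ⟨q', j'⟩ hy h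
  simp only [SS, Finset.coe_filter, Finset.mem_sigma, Finset.mem_range, Finset.mem_Icc,
    Set.mem_setOf_eq] at hx hy
  obtain ⟨a, b⟩ := ll_inj (by omega) hx.1.2.2 (by omega) hy.1.2.2 h
  subst a; subst b; rfl

lemma ww_injOn (K : ℕ) : Set.InjOn ww (SS K) := by
  rintro x hx y hy h
  unfold ww at h
  split_ifs at h with h1 h2 h2
  · obtain ⟨q, j⟩ := x
    obtain ⟨q', j'⟩ := y
    have := nn_inj h
    simp only at h1 h2 this
    subst h1; subst h2; subst this; rfl
  · exact absurd h (nn_ne _ _)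
  · exact absurd h.symm (nn_ne _ _)
  · have := Nat.pow_right_injective (le_refl 2) h
    apply ll_injOn K _ _ this
    · simpa using ⟨hx, h1⟩
    · simpa using ⟨hy, h2⟩

lemma sum_SS (K m : ℕ) (hm : qq m < K) (f : ℕ → ℝ) (g : (Σ _ : ℕ, ℕ) → ℝ) :
    ∑ x ∈ SS K, (if x.1 = qq m then f x.2 else 0) * g x
      = ∑ j ∈ Icc 1 (Nn (qq m + 1)), f j * g ⟨qq m, j⟩ := by
  unfold SS
  rw [Finset.sum_sigma, Finset.sum_eq_single (qq m)]
  · simp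
  · intro q _ hq
    simp [hq]
  · intro h; exact absurd (Finset.mem_range.2 hm) h

lemma olev_col_one (k i : ℕ) : olevskii (10 ^ k) i 1 = 1 / Real.sqrt (Nn k) := by
  rw [olev_one, Real.sqrt_eq_rpow, Nn]
  push_cast
  rw [← Real.rpow_natCast 2 (10 ^ k), ← Real.rpow_mul two_pos.le, one_div ((2:ℝ) ^ _),
    ← Real.rpow_neg two_pos.le]
  congr 1
  push_cast
  ring

lemma psi_expand (K m : ℕ) (hm : qq m < K) (t : ℝ) :
    psi m t = ∑ x ∈ SS K, cf m x * walsh (ww x) t := by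
  unfold cf
  rw [sum_SS K m hm (fun j => olevskii (10 ^ (qq m + 1)) (ii m + 1) j)
    (fun x => walsh (ww x) t), (qq_spec m).2.2]
  unfold psiBlock
  have hI : Icc 1 (Nn (qq m + 1)) = insert 1 (Icc 2 (Nn (qq m + 1))) := by
    ext j
    have := Nn_pos (qq m + 1)
    simp; omega
  rw [hI, Finset.sum_insert (by simp), olev_col_one]
  congr 1
  · simp [ww, phi, nn]; ring
  · refine Finset.sum_congr rfl fun j hj => ?_
    rw [Finset.mem_Icc] at hj
    unfold ww
    rw [if_neg (by simp; omega), walsh_two_pow]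
    unfold ll
    simp only [Nat.add_sub_cancel]
    rw [show Fn (qq m) + j - 2 + 1 = Fn (qq m) + j - 1 by omega]

lemma cf_orth (K m m' : ℕ) (hm : qq m < K) :
    ∑ x ∈ SS K, cf m x * cf m' x = if m = m' then 1 else 0 := by
  have h1 : ∀ x, cf m x = if x.1 = qq m then olevskii (10 ^ (qq m + 1)) (ii m + 1) x.2 else 0 :=
    fun x => rfl
  simp_rw [h1]
  rw [sum_SS K m hm (fun j => olevskii (10 ^ (qq m + 1)) (ii m + 1) j) (fun x => cf m' x)]
  unfold cf
  by_cases hq : qq m = qq m'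
  · simp only [hq, if_true]
    have hi := ii_lt m
    have hi' := ii_lt m'
    rw [hq] at hi
    have := olev_orth (10 ^ (qq m' + 1)) (ii m) (ii m') hi hi'
    unfold Nn
    rw [this]
    by_cases he : m = m'
    · simp [he]
    · rw [if_neg he, if_neg (fun h => he (qi_inj hq h))]
  · have : m ≠ m' := by rintro rfl; exact hq rfl
    simp [hq, this]

lemma card_block (A : Finset ℕ) (q : ℕ) : (A.filter fun m => q = qq m).card ≤ Nn (q + 1) := by
  rw [← Finset.card_range (Nn (q + 1))]
  apply Finset.card_le_card_of_injOn ii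
  · intro m hm
    simp only [Finset.coe_filter, Set.mem_setOf_eq] at hm
    have := ii_lt m
    rw [← hm.2] at this
    simpa using this
  · intro m hm m' hm' h
    simp only [Finset.coe_filter, Set.mem_setOf_eq] at hm hm'
    exact qi_inj (hm.2.symm.trans hm'.2) h

lemma col_sum (A : Finset ℕ) (hA : A.Nonempty) (K : ℕ) :
    ∑ x ∈ (SS K).filter (fun x => x.2 = 1), |∑ m ∈ A, cf m x| ≤ 4 * Real.sqrt A.card := by
  have hn : (0:ℝ) < A.card := by exact_mod_cast hA.card_pos
  have e : ∑ x ∈ (SS K).filter (fun x => x.2 = 1), |∑ m ∈ A, cf m x|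
      = ∑ q ∈ range K, ((A.filter fun m => q = qq m).card : ℝ) / Real.sqrt (Nn (q + 1)) := by
    unfold SS
    rw [Finset.sum_filter, Finset.sum_sigma]
    refine Finset.sum_congr rfl fun q _ => ?_
    rw [Finset.sum_eq_single 1]
    · have : ∀ m ∈ A, cf m ⟨q, 1⟩ = if q = qq m then 1 / Real.sqrt (Nn (q + 1)) else 0 := by
        intro m _
        unfold cf
        split_ifs with h
        · rw [← h]
          exact olev_col_one _ _
        · rfl
      rw [if_pos rfl, Finset.sum_congr rfl this, ← Finset.sum_filter, Finset.sum_const,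
        nsmul_eq_mul, mul_one_div, abs_of_nonneg (by positivity)]
    · intro j _ hj
      simp [hj]
    · intro h
      have := Nn_pos (q + 1)
      simp at h; omega
  rw [e]
  have hNp : ∀ q, (0:ℝ) < Nn q := fun q => by exact_mod_cast Nn_pos q
  apply lac (fun q => Real.sqrt (Nn (q + 1)))
  · intro q; exact Real.sqrt_pos.2 (hNp _)
  · intro q
    have h4 : (4:ℝ) * Nn (q + 1) ≤ Nn (q + 1 + 1) := by
      have h : 2 ^ 2 * 2 ^ (10 ^ (q + 1)) ≤ 2 ^ (10 ^ (q + 1 + 1)) := by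
        rw [← pow_add]
        apply Nat.pow_le_pow_right two_pos
        have : 1 ≤ 10 ^ (q + 1) := Nat.one_le_pow _ _ (by norm_num)
        rw [pow_succ 10 (q + 1)]; omega
      unfold Nn
      exact_mod_cast h
    calc 2 * Real.sqrt (Nn (q + 1)) = Real.sqrt (4 * Nn (q + 1)) := by
          rw [Real.sqrt_mul (by norm_num), show (4:ℝ) = 2 ^ 2 by norm_num,
            Real.sqrt_sq (by norm_num)]
      _ ≤ _ := Real.sqrt_le_sqrt h4
  · exact Real.sqrt_pos.2 hn
  · intro q
    rw [div_le_iff₀ (Real.sqrt_pos.2 (hNp _)), Real.mul_self_sqrt (hNp _).le]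
    exact_mod_cast card_block A q
  · intro q
    rw [Real.sq_sqrt hn.le]
    gcongr
    exact Finset.filter_subset _ _

lemma main_norm (p : ℝ) (hp : 1 < p) (A : Finset ℕ) (hA : A.Nonempty) :
    1 / (2 * (4 * (256 * EE) * 2 ^ p)) ≤
      ∫ t in (0:ℝ)..1, |(∑ m ∈ A, psi m t) / Real.sqrt A.card| ^ p ∧
    ∫ t in (0:ℝ)..1, |(∑ m ∈ A, psi m t) / Real.sqrt A.card| ^ p ≤ p ^ p * EE := by
  have hn : (0:ℝ) < A.card := by exact_mod_cast hA.card_pos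
  have hs := Real.sqrt_pos.2 hn
  obtain ⟨K, hK⟩ : ∃ K, A.image qq ⊆ range K := Finset.exists_nat_subset_range _
  have hK' : ∀ m ∈ A, qq m < K := fun m hm =>
    Finset.mem_range.1 (hK (Finset.mem_image_of_mem _ hm))
  set b : (Σ _ : ℕ, ℕ) → ℝ := fun x => (∑ m ∈ A, cf m x) / Real.sqrt A.card with hb
  have hf : ∀ t, (∑ m ∈ A, psi m t) / Real.sqrt A.card = ∑ x ∈ SS K, b x * walsh (ww x) t := by
    intro t
    rw [Finset.sum_congr rfl fun m hm => psi_expand K m (hK' m hm) t, Finset.sum_comm,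
      Finset.sum_div]
    refine Finset.sum_congr rfl fun x _ => ?_
    rw [← Finset.sum_mul, hb]
    ring
  have hb2 : ∑ x ∈ SS K, b x ^ 2 = 1 := by
    have : ∑ x ∈ SS K, (∑ m ∈ A, cf m x) ^ 2 = A.card := by
      simp_rw [sq, Finset.sum_mul_sum]
      rw [Finset.sum_comm]
      have : ∀ m ∈ A, ∑ x ∈ SS K, ∑ m' ∈ A, cf m x * cf m' x = 1 := by
        intro m hm
        rw [Finset.sum_comm]
        simp_rw [cf_orth K m _ (hK' m hm)]
        simp [hm]
      rw [Finset.sum_congr rfl this]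
      simp
    simp_rw [hb, div_pow, Real.sq_sqrt hn.le]
    rw [← Finset.sum_div, this, div_self hn.ne']
  simp_rw [hf]
  apply moments p hp
  · rw [sq_int _ _ (ww_injOn K), hb2]
  · apply exp_abs_bound (SS K) (fun x => x.2 = 1) ww ll (ll_injOn K) _ b hb2
    · have := col_sum A hA K
      simp_rw [hb, abs_div, abs_of_pos hs]
      rw [← Finset.sum_div, div_le_iff₀ hs]
      exact this
    · intro x _ hx
      unfold ww
      rw [if_neg hx]

end OlevProof

/-- The system `B = {ψ_m}` is democratic in `L_p([0,1])`, `1 < p < ∞`, with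
`‖∑_{m∈A} ψ_m‖_p ≍ |A|^{1/2}`. -/
theorem stmt_1 (p : ℝ) (hp : 1 < p) :
    ∃ c C : ℝ, 0 < c ∧ 0 < C ∧ ∀ A : Finset ℕ,
      c * (A.card : ℝ) ^ ((1:ℝ)/2) ≤ LpNorm p (fun t => ∑ m ∈ A, psi m t) ∧
      LpNorm p (fun t => ∑ m ∈ A, psi m t) ≤ C * (A.card : ℝ) ^ ((1:ℝ)/2) := by
  have hp0 : 0 < p := by linarith
  have hE := OlevProof.EE_pos
  set c0 : ℝ := 1 / (2 * (4 * (256 * OlevProof.EE) * 2 ^ p)) with hc0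
  set C0 : ℝ := p ^ p * OlevProof.EE with hC0
  have hc0p : 0 < c0 := by positivity
  have hC0p : 0 < C0 := by positivity
  refine ⟨c0 ^ (1 / p), C0 ^ (1 / p), by positivity, by positivity, fun A => ?_⟩
  rcases A.eq_empty_or_nonempty with rfl | hA
  · simp [LpNorm, Real.zero_rpow hp0.ne', Real.zero_rpow (inv_ne_zero hp0.ne')]
  obtain ⟨h1, h2⟩ := OlevProof.main_norm p hp A hA
  have hn : (0:ℝ) < A.card := by exact_mod_cast hA.card_pos
  have hs := Real.sqrt_pos.2 hn
  set J := ∫ t in (0:ℝ)..1, |(∑ m ∈ A, psi m t) / Real.sqrt A.card| ^ p with hJ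
  have hJ0 : 0 ≤ J := hc0p.le.trans h1
  have hL : LpNorm p (fun t => ∑ m ∈ A, psi m t) = J ^ (1 / p) * (A.card : ℝ) ^ ((1:ℝ)/2) := by
    have e : ∀ t, |∑ m ∈ A, psi m t| ^ p
        = (Real.sqrt A.card) ^ p * |(∑ m ∈ A, psi m t) / Real.sqrt A.card| ^ p := by
      intro t
      rw [← Real.mul_rpow hs.le (abs_nonneg _), abs_div, abs_of_pos hs, mul_div_cancel₀ _ hs.ne']
    unfold LpNorm
    rw [MeasureTheory.integral_Icc_eq_integral_Ioc,
      ← intervalIntegral.integral_of_le zero_le_one]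
    simp_rw [e]
    rw [intervalIntegral.integral_const_mul, ← hJ, Real.mul_rpow (by positivity) hJ0,
      ← Real.rpow_mul hs.le, mul_one_div_cancel hp0.ne', Real.rpow_one, Real.sqrt_eq_rpow, mul_comm]
  rw [hL]
  constructor
  · gcongr
  · gcongr
end

section
/- There exists a finite constant C such that for all k ≥ 1 and all rows i ∈ {1,…,2^k}, the ℓ_1-norm of the i-th row of the Olevskiĭ matrix satisfies Σ_{j=1}^{2^k} |a_{ij}^{(k)}| ≤ C. -/
open MeasureTheory Filter

lemma olev_aux (k i j : ℕ) (hi : 1 ≤ i) (hj : 2 ≤ j) (hjk : j ≤ 2 ^ k) :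
    |olevskii k i j| ≤ ∑ s ∈ Finset.range k,
      if j = 2 ^ s + 1 + (i - 1) / 2 ^ (k - s) then ((2:ℝ) ^ (-(1/2) : ℝ)) ^ (k - s) else 0 := by
  have hr : (0:ℝ) < (2:ℝ) ^ (-(1/2) : ℝ) := by positivity
  have hnn : ∀ s ∈ Finset.range k, (0:ℝ) ≤
      if j = 2 ^ s + 1 + (i - 1) / 2 ^ (k - s) then ((2:ℝ) ^ (-(1/2) : ℝ)) ^ (k - s) else 0 := by
    intro s _
    split_ifs
    · positivity
    · exact le_rfl
  obtain ⟨s, hs⟩ : ∃ s, s = Nat.log 2 (j - 1) := ⟨_, rfl⟩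
  have hsk : s < k := by
    rw [hs]; exact Nat.log_lt_of_lt_pow (by omega) (by omega)
  have hsj : 2 ^ s ≤ j - 1 := by
    rw [hs]; exact Nat.pow_log_le_self 2 (by omega)
  have hw : (2:ℝ) ^ (((s:ℝ) - k) / 2) = ((2:ℝ) ^ (-(1/2) : ℝ)) ^ (k - s) := by
    rw [← Real.rpow_natCast, ← Real.rpow_mul (by norm_num), Nat.cast_sub hsk.le]
    congr 1; ring
  have key : (j - 2 ^ s - 1) * 2 ^ (k - s) < i → i ≤ (j - 2 ^ s) * 2 ^ (k - s) →
      j = 2 ^ s + 1 + (i - 1) / 2 ^ (k - s) := by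
    intro h1 h2
    have : (i - 1) / 2 ^ (k - s) = j - 2 ^ s - 1 := by
      apply Nat.div_eq_of_lt_le
      · omega
      · rw [Nat.sub_add_cancel (by omega)]; omega
    omega
  have hp : 2 ^ (k - s) = 2 * 2 ^ (k - s - 1) := by
    rw [← pow_succ']; congr 1; omega
  have fin : j = 2 ^ s + 1 + (i - 1) / 2 ^ (k - s) → (2:ℝ) ^ (((s:ℝ) - k) / 2) ≤
      ∑ s ∈ Finset.range k,
      if j = 2 ^ s + 1 + (i - 1) / 2 ^ (k - s) then ((2:ℝ) ^ (-(1/2) : ℝ)) ^ (k - s) else 0 := by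
    intro h
    have := Finset.single_le_sum hnn (Finset.mem_range.2 hsk)
    rw [if_pos h] at this
    rwa [hw]
  have hpos : (0:ℝ) ≤ (2:ℝ) ^ (((s:ℝ) - k) / 2) := by positivity
  unfold olevskii
  rw [if_neg (by omega)]
  simp only [← hs]
  split_ifs with h1 h2
  · rw [abs_of_nonneg hpos]
    refine fin (key h1.1 (h1.2.trans ?_))
    rw [hp, ← mul_assoc]
    exact Nat.mul_le_mul_right _ (by omega)
  · rw [abs_neg, abs_of_nonneg hpos]
    refine fin (key (lt_of_le_of_lt ?_ h2.1) h2.2)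
    rw [hp, ← mul_assoc]
    exact Nat.mul_le_mul_right _ (by omega)
  · rw [abs_zero]; exact Finset.sum_nonneg hnn

/-- Uniform row `ℓ_1`-bound for the Olevskiĭ matrices:
`∑_{j=1}^{2^k} |a_{ij}^{(k)}| ≤ C` for all `k ≥ 1` and all rows `i`. -/
theorem stmt_5 :
    ∃ C : ℝ, ∀ k : ℕ, 1 ≤ k → ∀ i ∈ Finset.Icc 1 (2 ^ k),
      ∑ j ∈ Finset.Icc 1 (2 ^ k), |olevskii k i j| ≤ C := by
  have hr : (0:ℝ) < (2:ℝ) ^ (-(1/2) : ℝ) := by positivity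
  have hr1 : (2:ℝ) ^ (-(1/2) : ℝ) < 1 :=
    Real.rpow_lt_one_of_one_lt_of_neg (by norm_num) (by norm_num)
  refine ⟨1 + (1 - (2:ℝ) ^ (-(1/2) : ℝ))⁻¹, fun k hk i hi => ?_⟩
  have hi1 := (Finset.mem_Icc.1 hi).1
  rw [← Finset.add_sum_Ioc_eq_sum_Icc Nat.one_le_two_pow]
  refine add_le_add ?_ ?_
  · have : olevskii k i 1 = (2:ℝ) ^ (-(k:ℝ) / 2) := by simp [olevskii]
    rw [this, abs_of_nonneg (by positivity)]
    apply Real.rpow_le_one_of_one_le_of_nonpos (by norm_num)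
    have : (0:ℝ) ≤ k := by positivity
    linarith
  · refine (Finset.sum_le_sum fun j hj => olev_aux k i j hi1
      (Finset.mem_Ioc.1 hj).1 (Finset.mem_Ioc.1 hj).2).trans ?_
    rw [Finset.sum_comm]
    generalize (2:ℝ) ^ (-(1/2) : ℝ) = r at hr hr1 ⊢
    calc _ ≤ ∑ s ∈ Finset.range k, r ^ (k - s) := by
          refine Finset.sum_le_sum fun s _ => ?_
          rw [Finset.sum_ite_eq']
          split_ifs
          · exact le_rfl
          · positivity
      _ ≤ ∑ s ∈ Finset.range k, r ^ (k - 1 - s) := by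
          refine Finset.sum_le_sum fun s _ => ?_
          exact pow_le_pow_of_le_one hr.le hr1.le (by omega)
      _ = ∑ s ∈ Finset.range k, r ^ s := Finset.sum_range_reflect (fun s => r ^ s) k
      _ ≤ ∑' s, r ^ s := (summable_geometric_of_lt_one hr.le hr1).sum_le_tsum _
          (fun s _ => by positivity)
      _ = _ := tsum_geometric_of_lt_one hr.le hr1
end

section
/- The system B = {ψ_m}_{m=1}^∞ is uniformly bounded: there is a constant C such that |ψ_m(t)| ≤ C for all m ≥ 1 and almost every t ∈ [0,1]. In fact, since each Walsh function has modulus 1, |ψ_i^{(k)}(t)| ≤ Σ_{j=1}^{N_k} |a_{ij}^{(10^k)}|, which is bounded by the uniform row ℓ_1-bound of the Olevskiĭ matrices. -/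
open MeasureTheory Filter

theorem aux_rad_le (k : ℕ) (t : ℝ) : |rademacher k t| ≤ 1 := by
  unfold rademacher
  rcases Real.sign_apply_eq (Real.sin ((2:ℝ) ^ k * Real.pi * t)) with h | h | h <;> rw [h] <;> simp

theorem aux_walsh_le (n : ℕ) (t : ℝ) : |walsh n t| ≤ 1 := by
  unfold walsh
  rw [Finset.abs_prod]
  apply Finset.prod_le_one
  · intro i _; exact abs_nonneg _
  · intro i _
    split_ifs
    · exact aux_rad_le _ _
    · simp

theorem aux_sqrt (K : ℕ) : 1 / Real.sqrt ((2 ^ K : ℕ) : ℝ) = (2:ℝ) ^ (-(K:ℝ) / 2) := by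
  rw [Real.sqrt_eq_rpow, neg_div, Real.rpow_neg (by norm_num), one_div]
  congr 1
  push_cast
  rw [← Real.rpow_natCast, ← Real.rpow_mul (by norm_num)]
  congr 1; ring

theorem aux_block (k i : ℕ) (t : ℝ) :
    |psiBlock k i t| ≤ ∑ j ∈ Finset.Icc 1 (Nn k), |olevskii (10 ^ k) i j| := by
  have hN : 1 ≤ Nn k := Nat.one_le_two_pow
  have hs : ∑ j ∈ Finset.Icc 1 (Nn k), |olevskii (10 ^ k) i j|
      = |olevskii (10 ^ k) i 1| + ∑ j ∈ Finset.Icc 2 (Nn k), |olevskii (10 ^ k) i j| := by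
    rw [← Finset.add_sum_Ioc_eq_sum_Icc hN]
    rfl
  rw [hs]
  unfold psiBlock
  refine (abs_add_le _ _).trans (add_le_add ?_ ?_)
  · have h1 : |olevskii (10 ^ k) i 1| = 1 / Real.sqrt (Nn k) := by
      unfold Nn
      rw [aux_sqrt, olevskii, if_pos rfl, abs_of_pos (by positivity)]
    rw [h1, abs_div, abs_of_nonneg (Real.sqrt_nonneg _)]
    exact div_le_div_of_nonneg_right (aux_walsh_le _ _) (Real.sqrt_nonneg _)
  · refine (Finset.abs_sum_le_sum_abs _ _).trans (Finset.sum_le_sum fun j _ => ?_)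
    rw [abs_mul]
    exact mul_le_of_le_one_right (abs_nonneg _) (aux_rad_le _ _)

theorem aux_entry (K i n j : ℕ) (hn : n < K) (hj : j ∈ Finset.Ioc (2 ^ n) (2 ^ (n + 1))) :
    |olevskii K i j| ≤ (2:ℝ) ^ (((n:ℝ) - K) / 2) ∧
    (olevskii K i j ≠ 0 → (j - 2 ^ n - 1) * 2 ^ (K - n) < i ∧ i ≤ (j - 2 ^ n) * 2 ^ (K - n)) := by
  rw [Finset.mem_Ioc] at hj
  have h1 : 1 ≤ 2 ^ n := Nat.one_le_two_pow
  have hlog : Nat.log 2 (j - 1) = n :=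
    Nat.log_eq_of_pow_le_of_lt_pow (by omega) (by omega)
  have hpos : (0:ℝ) < (2:ℝ) ^ (((n:ℝ) - K) / 2) := by positivity
  have hd : 2 ^ (K - n) = 2 * 2 ^ (K - n - 1) := by
    rw [← pow_succ']; congr 1; omega
  obtain ⟨v, rfl⟩ : ∃ v, j = 2 ^ n + v + 1 := ⟨j - 2 ^ n - 1, by omega⟩
  rw [Nat.add_sub_cancel] at hlog
  have e1 : 2 ^ n + v + 1 - 2 ^ n = v + 1 := by omega
  have e2 : 2 * (v + 1) - 1 = 2 * v + 1 := by omega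
  unfold olevskii
  rw [if_neg (by omega)]
  simp only [hlog, e1, e2, Nat.add_sub_cancel, hd]
  split_ifs with h2 h3
  · refine ⟨(abs_of_pos hpos).le, fun _ => ⟨h2.1, h2.2.trans ?_⟩⟩
    nlinarith [Nat.zero_le (2 ^ (K - n - 1))]
  · refine ⟨by rw [abs_neg]; exact (abs_of_pos hpos).le, fun _ => ⟨lt_of_le_of_lt ?_ h3.1, h3.2⟩⟩
    nlinarith [Nat.zero_le (2 ^ (K - n - 1))]
  · simp [hpos.le]

theorem aux_level (K i n : ℕ) (hn : n < K) :
    ∑ j ∈ Finset.Ioc (2 ^ n) (2 ^ (n + 1)), |olevskii K i j| ≤ (2:ℝ) ^ (((n:ℝ) - K) / 2) := by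
  have hpos : (0:ℝ) < (2:ℝ) ^ (((n:ℝ) - K) / 2) := by positivity
  by_cases h : ∃ j ∈ Finset.Ioc (2 ^ n) (2 ^ (n + 1)), olevskii K i j ≠ 0
  · obtain ⟨j, hj, hne⟩ := h
    rw [Finset.sum_eq_single_of_mem j hj]
    · exact (aux_entry K i n j hn hj).1
    · intro b hb hbj
      by_contra hb0
      have hb0 : olevskii K i b ≠ 0 := fun h => hb0 (by simp [h])
      have A := (aux_entry K i n j hn hj).2 hne
      have B := (aux_entry K i n b hn hb).2 hb0
      have c1 := Nat.lt_of_mul_lt_mul_right (A.1.trans_le B.2)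
      have c2 := Nat.lt_of_mul_lt_mul_right (B.1.trans_le A.2)
      rw [Finset.mem_Ioc] at hj hb
      omega
  · push Not at h
    rw [Finset.sum_eq_zero fun j hj => by rw [h j hj, abs_zero]]
    exact hpos.le

theorem aux_row (K i n : ℕ) (hn : n ≤ K) :
    ∑ j ∈ Finset.Icc 1 (2 ^ n), |olevskii K i j| ≤ 5 * (2:ℝ) ^ (((n:ℝ) - K) / 2) := by
  induction n with
  | zero =>
    have hpos : (0:ℝ) < (2:ℝ) ^ (-(K:ℝ) / 2) := by positivity
    simp only [pow_zero, Finset.Icc_self, Finset.sum_singleton, Nat.cast_zero, zero_sub]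
    rw [olevskii, if_pos rfl, abs_of_pos hpos]
    linarith
  | succ n ih =>
    have hpos : (0:ℝ) < (2:ℝ) ^ (((n:ℝ) - K) / 2) := by positivity
    have hu : Finset.Icc 1 (2 ^ (n + 1))
        = Finset.Icc 1 (2 ^ n) ∪ Finset.Ioc (2 ^ n) (2 ^ (n + 1)) := by
      have h1 : 1 ≤ 2 ^ n := Nat.one_le_two_pow
      ext x
      simp only [Finset.mem_union, Finset.mem_Icc, Finset.mem_Ioc, pow_succ]
      omega
    have hdis : Disjoint (Finset.Icc 1 (2 ^ n)) (Finset.Ioc (2 ^ n) (2 ^ (n + 1))) := by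
      rw [Finset.disjoint_left]
      intro x hx hy
      rw [Finset.mem_Icc] at hx
      rw [Finset.mem_Ioc] at hy
      omega
    rw [hu, Finset.sum_union hdis]
    have a1 := ih (by omega)
    have a2 := aux_level K i n (by omega)
    have e : (2:ℝ) ^ ((((n + 1 : ℕ):ℝ) - K) / 2) = (2:ℝ) ^ (((n:ℝ) - K) / 2) * Real.sqrt 2 := by
      rw [Real.sqrt_eq_rpow, ← Real.rpow_add (by norm_num)]
      congr 1; push_cast; ring
    have hsq : (1.2:ℝ) ≤ Real.sqrt 2 := Real.le_sqrt_of_sq_le (by norm_num)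
    rw [e]
    nlinarith

/-- The system `B = {ψ_m}` is uniformly bounded, and in fact each `|ψ_i^{(k)}|` is
bounded by the `ℓ_1`-norm of the `i`-th row of the Olevskiĭ matrix `A^{10^k}`. -/
theorem stmt_7 :
    (∃ C : ℝ, ∀ m : ℕ, ∀ t ∈ Set.Icc (0:ℝ) 1, |psi m t| ≤ C) ∧
    (∀ k : ℕ, 1 ≤ k → ∀ i ∈ Finset.Icc 1 (Nn k), ∀ t ∈ Set.Icc (0:ℝ) 1,
      |psiBlock k i t| ≤ ∑ j ∈ Finset.Icc 1 (Nn k), |olevskii (10 ^ k) i j|) := by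
  refine ⟨⟨5, fun m t _ => ?_⟩, fun k _ i _ t _ => aux_block k i t⟩
  unfold psi
  refine (aux_block _ _ t).trans ?_
  refine (aux_row _ _ _ le_rfl).trans ?_
  simp
end

section
/- Let N_k = 2^{10^k}. Suppose B ⊂ ℕ is a finite nonempty set, and for each k ∈ B let λ_k be a real number with N_k^{3/4} < λ_k ≤ N_k. Let L = max B. Then Σ_{k∈B, k<L} λ_k/√N_k ≤ 2 λ_L/√N_L, and hence Σ_{k∈B} λ_k/√N_k ≤ 3 λ_L/√N_L ≤ 3 √λ_L ≤ 3 (Σ_{k∈B} λ_k)^{1/2}. -/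
open MeasureTheory Filter

lemma quarter_props (k : ℕ) : ∃ q : ℝ, q = (Nn k : ℝ) ^ ((1:ℝ)/4) ∧ 1 ≤ q ∧ 2 ≤ q ^ 4 ∧
    (Nn k : ℝ) = q ^ 4 ∧ Real.sqrt (Nn k) = q ^ 2 ∧ (Nn k : ℝ) ^ ((3:ℝ)/4) = q ^ 3 := by
  have hN : (2:ℝ) ≤ (Nn k : ℝ) := by
    have h : 2 ^ 1 ≤ Nn k := Nat.pow_le_pow_right (by norm_num) (Nat.one_le_pow _ _ (by norm_num))
    exact_mod_cast h
  have h0 : (0:ℝ) ≤ (Nn k : ℝ) := by linarith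
  have h4 : (Nn k : ℝ) = ((Nn k : ℝ) ^ ((1:ℝ)/4)) ^ 4 := by
    rw [← Real.rpow_natCast, ← Real.rpow_mul h0]; norm_num
  refine ⟨_, rfl, Real.one_le_rpow (by linarith) (by norm_num), by rw [← h4]; exact hN, h4, ?_, ?_⟩
  · rw [Real.sqrt_eq_rpow, ← Real.rpow_natCast, ← Real.rpow_mul h0]; norm_num
  · rw [← Real.rpow_natCast, ← Real.rpow_mul h0]; norm_num

lemma quarter_succ (k : ℕ) :
    (Nn (k+1) : ℝ) ^ ((1:ℝ)/4) = ((Nn k : ℝ) ^ ((1:ℝ)/4)) ^ 10 := by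
  have h : (Nn (k+1) : ℝ) = (Nn k : ℝ) ^ 10 := by
    simp only [Nn]; push_cast; rw [← pow_mul, pow_succ]
  have h0 : (0:ℝ) ≤ (Nn k : ℝ) := by positivity
  rw [h, ← Real.rpow_natCast, ← Real.rpow_natCast, ← Real.rpow_mul h0, ← Real.rpow_mul h0, mul_comm]

lemma sum_sqrt_le (L : ℕ) :
    ∑ k ∈ Finset.range L, Real.sqrt (Nn k) ≤ 2 * (Nn L : ℝ) ^ ((1:ℝ)/4) := by
  induction L with
  | zero => simp; positivity
  | succ L ih =>
    rw [Finset.sum_range_succ, quarter_succ]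
    obtain ⟨q, hq, h1, h2, -, hs, -⟩ := quarter_props L
    rw [← hq] at ih ⊢
    rw [hs]
    have h3 : q ^ 10 = q ^ 2 * (q ^ 4 * q ^ 4) := by ring
    have h4 : (2:ℝ) * 2 ≤ q ^ 4 * q ^ 4 := by gcongr
    have h5 : q ≤ q ^ 2 := by nlinarith
    have h6 : q ^ 2 * 4 ≤ q ^ 10 := by rw [h3]; gcongr; linarith
    nlinarith

/-- If `N_k^{3/4} < λ_k ≤ N_k` for `k ∈ B` and `L = max B`, then
`∑_{k∈B, k<L} λ_k/√N_k ≤ 2 λ_L/√N_L`, hence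
`∑_{k∈B} λ_k/√N_k ≤ 3 λ_L/√N_L ≤ 3 √λ_L ≤ 3 (∑_{k∈B} λ_k)^{1/2}`. -/
theorem stmt_11 (B : Finset ℕ) (hne : B.Nonempty) (hB1 : ∀ k ∈ B, 1 ≤ k)
    (lam : ℕ → ℝ)
    (hlam : ∀ k ∈ B, (Nn k : ℝ) ^ ((3:ℝ)/4) < lam k ∧ lam k ≤ (Nn k : ℝ)) :
    (∑ k ∈ B.filter (fun k => k < B.max' hne), lam k / Real.sqrt (Nn k)
        ≤ 2 * lam (B.max' hne) / Real.sqrt (Nn (B.max' hne))) ∧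
    (∑ k ∈ B, lam k / Real.sqrt (Nn k)
        ≤ 3 * lam (B.max' hne) / Real.sqrt (Nn (B.max' hne))) ∧
    (3 * lam (B.max' hne) / Real.sqrt (Nn (B.max' hne))
        ≤ 3 * Real.sqrt (lam (B.max' hne))) ∧
    (3 * Real.sqrt (lam (B.max' hne)) ≤ 3 * (∑ k ∈ B, lam k) ^ ((1:ℝ)/2)) := by
  have hL := B.max'_mem hne
  have hmax : ∀ k ∈ B, k ≤ B.max' hne := fun k hk => B.le_max' k hk
  generalize B.max' hne = L at hL hmax ⊢
  have hpos : ∀ k ∈ B, 0 ≤ lam k := fun k hk =>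
    le_trans (by positivity) (hlam k hk).1.le
  have hone : ∀ k ∈ B, lam k / Real.sqrt (Nn k) ≤ Real.sqrt (Nn k) := fun k hk =>
    (div_le_div_of_nonneg_right (hlam k hk).2 (Real.sqrt_nonneg _)).trans (Real.div_sqrt).le
  have hS := sum_sqrt_le L
  obtain ⟨q, hq, h1, h2, h4, hs, h3⟩ := quarter_props L
  obtain ⟨hl, hu⟩ := hlam L hL
  have hq0 : 0 < q := by linarith
  rw [h3] at hl
  have hqL : q ≤ lam L / Real.sqrt (Nn L) := by
    rw [hs, le_div_iff₀ (by positivity)]; nlinarith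
  have hfirst : ∑ k ∈ B.filter (fun k => k < L), lam k / Real.sqrt (Nn k)
      ≤ 2 * lam L / Real.sqrt (Nn L) := by
    calc _ ≤ ∑ k ∈ B.filter (fun k => k < L), Real.sqrt (Nn k) :=
          Finset.sum_le_sum fun k hk => hone k (Finset.mem_filter.1 hk).1
      _ ≤ ∑ k ∈ Finset.range L, Real.sqrt (Nn k) := by
          apply Finset.sum_le_sum_of_subset_of_nonneg
          · intro k hk
            exact Finset.mem_range.2 (Finset.mem_filter.1 hk).2
          · intros; positivity
      _ ≤ 2 * q := by rw [hq]; exact hS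
      _ ≤ _ := by rw [mul_div_assoc]; linarith
  refine ⟨hfirst, ?_, ?_, ?_⟩
  · have hset : B.filter (fun k => ¬ k < L) = {L} := by
      ext k
      simp only [Finset.mem_filter, Finset.mem_singleton]
      constructor
      · rintro ⟨hk, h⟩
        have := hmax k hk
        omega
      · rintro rfl
        exact ⟨hL, lt_irrefl _⟩
    rw [← Finset.sum_filter_add_sum_filter_not B (fun k => k < L), hset, Finset.sum_singleton]
    rw [mul_div_assoc] at hfirst ⊢
    linarith
  · rw [mul_div_assoc]
    have hl0 := hpos L hL
    have h5 : lam L / Real.sqrt (Nn L) ≤ Real.sqrt (lam L) := by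
      rw [div_le_iff₀ (by rw [hs]; positivity)]
      calc lam L = Real.sqrt (lam L) * Real.sqrt (lam L) := (Real.mul_self_sqrt hl0).symm
        _ ≤ _ := by gcongr
    linarith
  · rw [← Real.sqrt_eq_rpow]
    have h6 : lam L ≤ ∑ k ∈ B, lam k := Finset.single_le_sum hpos hL
    gcongr
end
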